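/- arXiv:1707.08162 — 3 statements merged into one kernel-verified Lean document; each statement's English description precedes it below -/
import Mathlib

section
/- Assume in addition L = ℓ − k > 0, and let β₁(α) = (kℓ/L)·α² + O(α³), β₂(α) = −ℓ·α² + O(α³) and β₃(α) = k·α² + O(α³) be the three bifurcation curves of the displacement function. Then for all sufficiently small α ≠ 0: β₁(α) > 0; if α > 0 then 0 < β₂(α) < β₁(α); and if α < 0 then β₃(α) < 0 < β₁(α). -/
/- STATEMENT 10: relative position of the bifurcation curves
β₁(α) = (kℓ/L)α² + O(α³), β₂(α) = −ℓα² + O(α³), β₃(α) = kα² + O(α³), for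
ℓ < 0, k < 0, L = ℓ − k > 0: for small α ≠ 0, β₁(α) > 0; if α > 0 then
0 < β₂(α) < β₁(α); if α < 0 then β₃(α) < 0 < β₁(α). -/
theorem stmt_10 (ℓ k L : ℝ) (hℓ : ℓ < 0) (hk : k < 0) (hLdef : L = ℓ - k) (hLpos : 0 < L)
    (β₁ β₂ β₃ : ℝ → ℝ) (C ε₀ : ℝ) (hC : 0 < C) (hε₀ : 0 < ε₀)
    (hβ₁ : ∀ α : ℝ, |α| < ε₀ → |β₁ α - (k * ℓ / L) * α ^ 2| ≤ C * |α| ^ 3)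
    (hβ₂ : ∀ α : ℝ, |α| < ε₀ → |β₂ α + ℓ * α ^ 2| ≤ C * |α| ^ 3)
    (hβ₃ : ∀ α : ℝ, |α| < ε₀ → |β₃ α - k * α ^ 2| ≤ C * |α| ^ 3) :
    ∃ ε > (0 : ℝ), ∀ α : ℝ, α ≠ 0 → |α| < ε →
      0 < β₁ α ∧
      (0 < α → 0 < β₂ α ∧ β₂ α < β₁ α) ∧
      (α < 0 → β₃ α < 0 ∧ 0 < β₁ α) := by
  have h1 : 0 < k * ℓ / L := div_pos (mul_pos_of_neg_of_neg hk hℓ) hLpos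
  have h2 : 0 < ℓ ^ 2 / L / 2 := by
    have : ℓ ≠ 0 := hℓ.ne
    positivity
  have hid : k * ℓ / L + ℓ = 2 * (ℓ ^ 2 / L / 2) := by
    have hL : L ≠ 0 := hLpos.ne'
    field_simp
    rw [hLdef]
    ring
  obtain ⟨m, hm, m1, m2, m3, m4⟩ : ∃ m : ℝ, 0 < m ∧ m ≤ k * ℓ / L ∧ m ≤ ℓ ^ 2 / L / 2 ∧
      m ≤ -ℓ ∧ m ≤ -k := by
    refine ⟨min (min (k * ℓ / L) (ℓ ^ 2 / L / 2)) (min (-ℓ) (-k)), ?_, ?_, ?_, ?_, ?_⟩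
    · exact lt_min (lt_min h1 h2) (lt_min (by linarith) (by linarith))
    · exact (min_le_left _ _).trans (min_le_left _ _)
    · exact (min_le_left _ _).trans (min_le_right _ _)
    · exact (min_le_right _ _).trans (min_le_left _ _)
    · exact (min_le_right _ _).trans (min_le_right _ _)
  refine ⟨min ε₀ (m / C), lt_min hε₀ (div_pos hm hC), ?_⟩
  intro α hα hlt
  have ha : |α| < ε₀ := hlt.trans_le (min_le_left _ _)
  have hb : |α| * C < m := (lt_div_iff₀ hC).1 (hlt.trans_le (min_le_right _ _))
  have hsq : 0 < α ^ 2 := by positivity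
  have hcub : C * |α| ^ 3 < m * α ^ 2 := by
    have : C * |α| ^ 3 = (|α| * C) * α ^ 2 := by
      rw [← sq_abs α]
      ring
    rw [this]
    exact mul_lt_mul_of_pos_right hb hsq
  have e1 := abs_le.1 (hβ₁ α ha)
  have e2 := abs_le.1 (hβ₂ α ha)
  have e3 := abs_le.1 (hβ₃ α ha)
  have n1 := mul_le_mul_of_nonneg_right m1 hsq.le
  have n2 := mul_le_mul_of_nonneg_right m2 hsq.le
  have n3 := mul_le_mul_of_nonneg_right m3 hsq.le
  have n4 := mul_le_mul_of_nonneg_right m4 hsq.le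
  have hid2 : (k * ℓ / L) * α ^ 2 + ℓ * α ^ 2 = 2 * ((ℓ ^ 2 / L / 2) * α ^ 2) := by
    rw [← add_mul, hid]
    ring
  have p1 : 0 < β₁ α := by linarith [e1.1]
  refine ⟨p1, fun _ => ⟨?_, ?_⟩, fun _ => ⟨?_, p1⟩⟩
  · linarith [e2.1]
  · linarith [e2.2, e1.1]
  · linarith [e3.2]
end

section
/- For every x₀ ∈ (0, 1/(2√2)), the set {x ∈ ℝ : x > 0 and 2x⁴ − x²/2 = 2x₀⁴ − x₀²/2} is exactly the two-element set {x₀, √(1 − 4x₀²)/2}, and x₀ ≠ √(1 − 4x₀²)/2. In particular, the first return ξ⁺(x₀) to the positive x-axis along the level curve of H⁺ through (x₀, 0) satisfies ξ⁺(x₀) = √(1 − 4x₀²)/2. -/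
/- STATEMENT 12: for x₀ ∈ (0, 1/(2√2)), the positive solutions of
2x⁴ − x²/2 = 2x₀⁴ − x₀²/2 are exactly x₀ and √(1 − 4x₀²)/2, and these two values
are distinct; hence the first return ξ⁺(x₀) along the level curve of
H⁺(x, y) = 2x⁴ − x²/2 + y − y²/2 through (x₀, 0) is √(1 − 4x₀²)/2. -/
theorem stmt_12 (x₀ : ℝ) (hx₀ : x₀ ∈ Set.Ioo (0 : ℝ) (1 / (2 * Real.sqrt 2))) :
    {x : ℝ | 0 < x ∧ 2 * x ^ 4 - x ^ 2 / 2 = 2 * x₀ ^ 4 - x₀ ^ 2 / 2}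
      = {x₀, Real.sqrt (1 - 4 * x₀ ^ 2) / 2} ∧
    x₀ ≠ Real.sqrt (1 - 4 * x₀ ^ 2) / 2 := by
  obtain ⟨h0, h1⟩ := hx₀
  have h2 : Real.sqrt 2 ^ 2 = 2 := Real.sq_sqrt (by norm_num)
  have h2p : 0 < Real.sqrt 2 := Real.sqrt_pos.mpr (by norm_num)
  have h8 : 8 * x₀ ^ 2 < 1 := by
    rw [lt_div_iff₀ (by positivity)] at h1
    have h3 : (x₀ * (2 * Real.sqrt 2)) ^ 2 < 1 :=
      pow_lt_one₀ (by positivity) h1 (by norm_num)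
    have h4 : (x₀ * (2 * Real.sqrt 2)) ^ 2 = 4 * x₀ ^ 2 * Real.sqrt 2 ^ 2 := by ring
    rw [h4, h2] at h3
    linarith
  have hpos : 0 < 1 - 4 * x₀ ^ 2 := by nlinarith [sq_nonneg x₀]
  have hs := Real.sq_sqrt hpos.le
  have hsp := Real.sqrt_pos.mpr hpos
  generalize Real.sqrt (1 - 4 * x₀ ^ 2) = s at hs hsp
  refine ⟨?_, ?_⟩
  · ext x
    simp only [Set.mem_setOf_eq, Set.mem_insert_iff, Set.mem_singleton_iff]
    constructor
    · rintro ⟨hx, he⟩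
      have hf : (x - x₀) * (x - s / 2) * ((x + x₀) * (x + s / 2)) = 0 := by
        linear_combination he / 2 - (x ^ 2 - x₀ ^ 2) / 4 * hs
      have hne : (x + x₀) * (x + s / 2) ≠ 0 := by positivity
      rcases mul_eq_zero.mp ((mul_eq_zero.mp hf).resolve_right hne) with h | h
      · left; linarith
      · right; linarith
    · rintro (rfl | rfl)
      · exact ⟨h0, rfl⟩
      · refine ⟨by positivity, ?_⟩
        linear_combination (s ^ 2 / 8 - x₀ ^ 2 / 2) * hs
  · intro h
    have : s = 2 * x₀ := by linarith
    subst this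
    nlinarith
end

section
/- The function g(x) = (−1 + 2x − √(1 + 4(1 − 3x)x) + 2√(1 − 4x²))/4, defined for x in a neighborhood of 0 (where both radicands are positive), satisfies g(x) = x² + O(x³) as x → 0; in particular there exists δ > 0 such that g(x) > 0 for all x ∈ (0, δ), and x = 0 is a zero of g of multiplicity exactly two. Consequently the simple two-fold cycle Γ₀ of the piecewise Hamiltonian system Z_{0,0} is elementary and stable. -/
theorem stmt_15_aux (x s p e : ℝ) (hs : 0 ≤ s) (hp : 1 / 2 ≤ p) (h : s ^ 2 - p ^ 2 = e) :
    |s - p| ≤ 2 * |e| := by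
  have h1 : e = (s - p) * (s + p) := by rw [← h]; ring
  rw [h1, abs_mul, abs_of_pos (by linarith : 0 < s + p)]
  nlinarith [abs_nonneg (s - p)]

theorem stmt_15_bound (x : ℝ) (hx : |x| < 1 / 100) :
    |(-1 + 2 * x - Real.sqrt (1 + 4 * (1 - 3 * x) * x)
        + 2 * Real.sqrt (1 - 4 * x ^ 2)) / 4 - x ^ 2| ≤ 20 * |x| ^ 3 := by
  obtain ⟨h1, h2⟩ := abs_lt.mp hx
  have ha := stmt_15_aux x (Real.sqrt (1 + 4 * (1 - 3 * x) * x)) (1 + 2 * x - 8 * x ^ 2)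
    (x ^ 3 * (32 - 64 * x)) (Real.sqrt_nonneg _) (by nlinarith)
    (by rw [Real.sq_sqrt (by nlinarith)]; ring)
  have hb := stmt_15_aux x (Real.sqrt (1 - 4 * x ^ 2)) (1 - 2 * x ^ 2)
    (x ^ 3 * (-4 * x)) (Real.sqrt_nonneg _) (by nlinarith)
    (by rw [Real.sq_sqrt (by nlinarith)]; ring)
  have hc : |x ^ 3 * (32 - 64 * x)| ≤ |x| ^ 3 * 33 := by
    rw [abs_mul, abs_pow]
    gcongr
    rw [abs_le]; constructor <;> linarith
  have hd : |x ^ 3 * (-4 * x)| ≤ |x| ^ 3 * 1 := by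
    rw [abs_mul, abs_pow]
    gcongr
    rw [abs_le]; constructor <;> linarith
  have h3 : 0 ≤ |x| ^ 3 := by positivity
  obtain ⟨a1, a2⟩ := abs_le.mp ha
  obtain ⟨b1, b2⟩ := abs_le.mp hb
  rw [abs_le]; constructor <;> linarith

theorem stmt_15_deriv (x : ℝ) (hx : |x| < 1 / 100) :
    HasDerivAt (fun x : ℝ => (-1 + 2 * x - Real.sqrt (1 + 4 * (1 - 3 * x) * x)
        + 2 * Real.sqrt (1 - 4 * x ^ 2)) / 4)
      ((2 - (4 - 24 * x) / (2 * Real.sqrt (1 + 4 * (1 - 3 * x) * x))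
        + 2 * ((-8 * x) / (2 * Real.sqrt (1 - 4 * x ^ 2)))) / 4) x := by
  obtain ⟨h1, h2⟩ := abs_lt.mp hx
  have hi := hasDerivAt_id' x
  have e1 : HasDerivAt (fun x : ℝ => 1 + 4 * (1 - 3 * x) * x) (4 - 24 * x) x := by
    refine (((((hi.const_mul 3).const_sub 1).const_mul 4).mul hi).const_add 1).congr_deriv ?_
    ring
  have e2 : HasDerivAt (fun x : ℝ => 1 - 4 * x ^ 2) (-8 * x) x := by
    refine (((hi.pow 2).const_mul 4).const_sub 1).congr_deriv ?_
    norm_num; ring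
  refine ((((((hi.const_mul 2).const_add (-1)).sub (e1.sqrt (by nlinarith))).add
    ((e2.sqrt (by nlinarith)).const_mul 2)).div_const 4)).congr_deriv ?_
  ring

theorem stmt_15_deriv2 :
    HasDerivAt (fun x : ℝ => (2 - (4 - 24 * x) / (2 * Real.sqrt (1 + 4 * (1 - 3 * x) * x))
        + 2 * ((-8 * x) / (2 * Real.sqrt (1 - 4 * x ^ 2)))) / 4) 2 0 := by
  have hi := hasDerivAt_id' (0 : ℝ)
  have e1 : HasDerivAt (fun x : ℝ => 1 + 4 * (1 - 3 * x) * x) 4 0 := by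
    refine (((((hi.const_mul 3).const_sub 1).const_mul 4).mul hi).const_add 1).congr_deriv ?_
    norm_num
  have e2 : HasDerivAt (fun x : ℝ => 1 - 4 * x ^ 2) 0 0 := by
    refine (((hi.pow 2).const_mul 4).const_sub 1).congr_deriv ?_
    norm_num
  have s1 := (e1.sqrt (by norm_num)).const_mul 2
  have s2 := (e2.sqrt (by norm_num)).const_mul 2
  have q1 := ((hi.const_mul 24).const_sub 4).div s1 (by norm_num)
  have q2 := (hi.const_mul (-8)).div s2 (by norm_num)
  refine (((q1.const_sub 2).add (q2.const_mul 2)).div_const 4).congr_deriv ?_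
  norm_num

/- STATEMENT 15: the displacement function of the piecewise Hamiltonian system
Z_{0,0}, g(x) = (−1 + 2x − √(1 + 4(1 − 3x)x) + 2√(1 − 4x²))/4, satisfies
g(x) = x² + O(x³), is positive on (0, δ), and has at 0 a zero of multiplicity
exactly two with positive second derivative: the simple two-fold cycle Γ₀ is
elementary and stable. -/
theorem stmt_15 :
    let g : ℝ → ℝ := fun x =>
      (-1 + 2 * x - Real.sqrt (1 + 4 * (1 - 3 * x) * x)
        + 2 * Real.sqrt (1 - 4 * x ^ 2)) / 4
    (∃ δ > (0 : ℝ), ∃ C > (0 : ℝ), ∀ x : ℝ, |x| < δ → |g x - x ^ 2| ≤ C * |x| ^ 3) ∧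
    (∃ δ > (0 : ℝ), ∀ x ∈ Set.Ioo (0 : ℝ) δ, 0 < g x) ∧
    g 0 = 0 ∧ deriv g 0 = 0 ∧ deriv (deriv g) 0 ≠ 0 ∧ 0 < deriv (deriv g) 0 := by
  intro g
  have h2 : deriv (deriv g) 0 = 2 := by
    refine (stmt_15_deriv2.congr_of_eventuallyEq ?_).deriv
    filter_upwards [Metric.ball_mem_nhds (0 : ℝ) (by norm_num : (0 : ℝ) < 1 / 100)] with x hx
    refine (stmt_15_deriv x ?_).deriv
    simpa [Real.dist_eq] using hx
  refine ⟨⟨1 / 100, by norm_num, 20, by norm_num, stmt_15_bound⟩,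
    ⟨1 / 100, by norm_num, ?_⟩, ?_, ?_, ?_, ?_⟩
  · rintro x ⟨hx0, hx1⟩
    have hb : |g x - x ^ 2| ≤ 20 * |x| ^ 3 := stmt_15_bound x (by rwa [abs_of_pos hx0])
    rw [abs_of_pos hx0] at hb
    have := (abs_le.mp hb).1
    have h3 : 0 < x ^ 2 * (1 - 20 * x) := mul_pos (by positivity) (by linarith)
    nlinarith
  · simp only [g]; norm_num
  · refine (stmt_15_deriv 0 (by norm_num)).deriv.trans ?_
    norm_num
  · rw [h2]; norm_num
  · rw [h2]; norm_num
end
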